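/- Let p, k ∈ ℕ₀ and 0 < α < 2. Let g ∈ C_c^∞(ℝ²) with g(0) = 1 and ∂^l g(0) = 0 for all l ∈ ℕ₀² with 1 ≤ |l|₁ ≤ 2p+1, and let c(h) ∈ ℝ^{N_p} be the right-hand-side vector of the on-diagonal moment linear system with components c_i(h) = h^{−(2|ξ_i|₁+2−α)} ( ∫_{ℝ²} g(x) s(x) x^{2ξ_i} dx − T_h^0[g·s·x^{2ξ_i}] ), and let 𝔠(α) = lim_{h→0} c(h). Then c(h) admits an asymptotic expansion in even powers of h: there exist vectors C₀,…,C_k ∈ ℝ^{N_p} independent of h and a constant C > 0 such that for all sufficiently small h > 0, | c(h) − 𝔠(α) − h^{2p+2} Σ_{j=0}^{k} C_j h^{2j} | ≤ C h^{2p+4+2k}. -/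

import Mathlib

open MeasureTheory Real

noncomputable def euclNorm {n : ℕ} (x : Fin n → ℝ) : ℝ := Real.sqrt (∑ j, x j ^ 2)

noncomputable def pd {n : ℕ} (j : Fin n) (f : (Fin n → ℝ) → ℝ) : (Fin n → ℝ) → ℝ :=
  fun x => fderiv ℝ f x (Pi.single j 1)

noncomputable def md {n : ℕ} (γ : Fin n → ℕ) (f : (Fin n → ℝ) → ℝ) : (Fin n → ℝ) → ℝ :=
  (List.finRange n).foldr (fun j g => (pd j)^[γ j] g) f

noncomputable def trap {n : ℕ} (h : ℝ) (f : (Fin n → ℝ) → ℝ) : ℝ :=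
  h ^ n * ∑' β : {β : Fin n → ℤ // β ≠ 0}, f (fun j => (β.1 j : ℝ) * h)

noncomputable def sOn (α : ℝ) (x : Fin 2 → ℝ) : ℝ := x 0 ^ 2 / euclNorm x ^ ((2:ℝ) + α)


/-- lattice embedding -/
def latP (β : Fin 2 → ℤ) : Fin 2 → ℝ := fun j => (β j : ℝ)

noncomputable def errQ (u : (Fin 2 → ℝ) → ℝ) : ℝ := (∫ x, u x) - ∑' β : Fin 2 → ℤ, u (latP β)

lemma norm_latP (β : Fin 2 → ℤ) : ‖latP β‖ = ‖β‖ := by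
  simp only [latP, Pi.norm_def]
  congr 2

lemma summable_wt : Summable fun β : Fin 2 → ℤ => 1 / (1 + ‖latP β‖) ^ 3 := by
  have h := EisensteinSeries.summable_one_div_norm_rpow (k := 3) (by norm_num)
  have h0 : Summable (fun β : Fin 2 → ℤ => if β = 0 then (1 : ℝ) else 0) :=
    (summable_of_ne_finset_zero (s := {(0 : Fin 2 → ℤ)}) (by
      intro b hb; simp at hb; simp [hb]))
  refine Summable.of_nonneg_of_le (fun β => by positivity) (fun β => ?_) (h.add h0)
  rw [norm_latP]
  by_cases hβ : β = 0
  · subst hβ; simp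
  · have : 0 < ‖β‖ := norm_pos_iff.mpr hβ
    simp only [hβ, if_false, add_zero]
    rw [Real.rpow_neg this.le, one_div]
    have e : ‖β‖ ^ (3:ℝ) = ‖β‖ ^ (3:ℕ) := by rw [← Real.rpow_natCast]; norm_num
    rw [e]
    gcongr
    linarith

lemma integrable_wt : Integrable (fun x : Fin 2 → ℝ => 1 / (1 + ‖x‖) ^ 3) := by
  have := integrable_one_add_norm (E := Fin 2 → ℝ) (μ := volume) (r := 3) (by simp; norm_num)
  refine this.congr (Filter.Eventually.of_forall fun x => ?_)
  have h : 0 < 1 + ‖x‖ := by positivity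
  simp only
  rw [Real.rpow_neg h.le, one_div]
  congr 1
  rw [← Real.rpow_natCast]; norm_num

lemma cs_bound {F : Type*} [NormedAddCommGroup F] (u : (Fin 2 → ℝ) → F) (hu : Continuous u) (hc : HasCompactSupport u) (n : ℕ) :
    ∃ C, 0 ≤ C ∧ ∀ x, ‖u x‖ * (1 + ‖x‖) ^ n ≤ C := by
  have h1 : Continuous fun x => ‖u x‖ * (1 + ‖x‖) ^ n := by fun_prop
  have h2 : HasCompactSupport fun x => ‖u x‖ * (1 + ‖x‖) ^ n := hc.norm.mul_right
  obtain ⟨C, hC⟩ := h1.bounded_above_of_compact_support h2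
  exact ⟨C, le_trans (norm_nonneg _) (hC 0), fun x => le_trans (le_abs_self _) (hC x)⟩

lemma summable_lat (u : (Fin 2 → ℝ) → ℝ) (hu : Continuous u) (hc : HasCompactSupport u) :
    Summable fun β => u (latP β) := by
  obtain ⟨C, h0, hC⟩ := cs_bound u hu hc 3
  refine Summable.of_norm_bounded (summable_wt.mul_left C) fun β => ?_
  have := hC (latP β)
  rw [mul_one_div, le_div_iff₀ (by positivity)]
  exact this

def cellQ (β : Fin 2 → ℤ) : Set (Fin 2 → ℝ) := {x | ∀ j, ⌊x j⌋ = β j}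

lemma cell_meas (β) : MeasurableSet (cellQ β) := by
  have : cellQ β = ⋂ j, (fun x : Fin 2 → ℝ => ⌊x j⌋) ⁻¹' {β j} := by
    ext x; simp [cellQ]
  rw [this]
  refine MeasurableSet.iInter fun j => ?_
  exact (Int.measurable_floor.comp (measurable_pi_apply j)) (measurableSet_singleton _)

lemma cell_disj : Pairwise (Function.onFun Disjoint cellQ) := by
  intro β γ h
  rw [Function.onFun, Set.disjoint_left]
  intro x hx hy
  exact h (funext fun j => (hx j).symm.trans (hy j))

lemma cell_union : ⋃ β, cellQ β = Set.univ := by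
  ext x; simp only [Set.mem_iUnion, Set.mem_univ, iff_true]
  exact ⟨fun j => ⌊x j⌋, fun j => rfl⟩

lemma cell_shift (f : (Fin 2 → ℝ) → ℝ) (β) :
    ∫ x in cellQ β, f x = ∫ x in cellQ 0, f (x + latP β) := by
  have hp : MeasurePreserving (fun x : Fin 2 → ℝ => x + latP β) volume volume :=
    measurePreserving_add_right volume _
  have he : MeasurableEmbedding (fun x : Fin 2 → ℝ => x + latP β) :=
    (MeasurableEquiv.addRight (latP β)).measurableEmbedding
  have := hp.setIntegral_preimage_emb he f (cellQ β)
  rw [← this]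
  congr 2
  ext x
  simp [cellQ, latP]

lemma cell_vol : volume (cellQ 0) = 1 := by
  have h : cellQ 0 = Set.pi Set.univ fun _ => Set.Ico (0:ℝ) 1 := by
    ext x; simp [cellQ, Int.floor_eq_iff]
  rw [h, Real.volume_pi_Ico]; simp

lemma cell_norm {y} (hy : y ∈ cellQ 0) : ‖y‖ ≤ 1 := by
  rw [pi_norm_le_iff_of_nonneg zero_le_one]
  intro j
  have := hy j
  simp [Int.floor_eq_iff] at this
  rw [Real.norm_eq_abs, abs_le]; constructor <;> linarith

lemma hasSum_cell (u : (Fin 2 → ℝ) → ℝ) (hu : Integrable u) :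
    HasSum (fun β => ∫ x in cellQ 0, u (x + latP β)) (∫ x, u x) := by
  have := hasSum_integral_iUnion (μ := volume) (f := u) cell_meas cell_disj hu.integrableOn
  rw [cell_union, Measure.restrict_univ] at this
  rwa [funext (fun β => cell_shift u β)] at this

lemma errQ_le (u : (Fin 2 → ℝ) → ℝ) (hu : Continuous u) (hc : HasCompactSupport u) (B : ℝ)
    (hB : ∀ y : Fin 2 → ℝ, ‖y‖ ≤ 1 → |errQ (fun x => u (x + y) - u x)| ≤ B) : |errQ u| ≤ B := by
  have hi : Integrable u volume := hu.integrable_of_hasCompactSupport hc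
  have hS := summable_lat u hu hc
  have h3 : errQ u = ∫ x in cellQ 0, ((∑' β, u (x + latP β)) - ∑' β, u (latP β)) := by
    have h1 := hasSum_cell u hi
    have h2 := hasSum_cell (fun x => ‖u x‖) hi.norm
    have hk : ∀ c : ℝ, IntegrableOn (fun _ => c) (cellQ 0) volume := fun c =>
      integrableOn_const (by rw [cell_vol]; simp)
    have hs : ∀ β, IntegrableOn (fun x => u (x + latP β)) (cellQ 0) volume :=
      fun β => (hi.comp_add_right _).integrableOn
    have h4 : ∀ β, Integrable (fun x => u (x + latP β) - u (latP β)) (volume.restrict (cellQ 0)) :=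
      fun β => (hs β).sub (hk _)
    have hci : ∀ c : ℝ, ∫ x in cellQ 0, c = c := fun c => by
      rw [setIntegral_const]; simp [Measure.real, cell_vol]
    have h5 := hasSum_integral_of_summable_integral_norm h4 (by
      refine Summable.of_nonneg_of_le (fun β => integral_nonneg fun _ => norm_nonneg _) (fun β => ?_)
        (h2.summable.add hS.norm)
      rw [← hci ‖u (latP β)‖, ← integral_add (hs β).norm (hk _)]
      exact integral_mono (h4 β).norm ((hs β).norm.add (hk _)) fun x => norm_sub_le _ _)
    have h6 : HasSum (fun β => ∫ x in cellQ 0, (u (x + latP β) - u (latP β))) (errQ u) := by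
      have e : (fun β => ∫ x in cellQ 0, (u (x + latP β) - u (latP β))) =
          fun β => (∫ x in cellQ 0, u (x + latP β)) - u (latP β) :=
        funext fun β => by rw [integral_sub (hs β) (hk _), hci]
      rw [e]
      exact h1.sub hS.hasSum
    rw [h6.unique h5]
    refine integral_congr_ae (Filter.Eventually.of_forall fun x => ?_)
    have hc' : HasCompactSupport fun z => u (z + x) := hc.comp_homeomorph (Homeomorph.addRight x)
    have hu' : Continuous fun z => u (z + x) := by fun_prop
    have := summable_lat _ hu' hc'
    simp only [add_comm _ x] at this
    exact this.tsum_sub hS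
  rw [h3, ← Real.norm_eq_abs]
  have := norm_setIntegral_le_of_norm_le_const (μ := volume) (s := cellQ 0) (C := B)
    (f := fun x => ((∑' β, u (x + latP β)) - ∑' β, u (latP β))) (by rw [cell_vol]; simp) ?_
  · simpa [Measure.real, cell_vol] using this
  · intro y hy
    have hu' : Continuous fun x => u (x + y) := by fun_prop
    have hc' : HasCompactSupport fun x => u (x + y) := hc.comp_homeomorph (Homeomorph.addRight y)
    have := hB y (cell_norm hy)
    rw [errQ, integral_sub (hi.comp_add_right y) hi, integral_add_right_eq_self, sub_self, zero_sub,
      abs_neg, Summable.tsum_sub (summable_lat _ hu' hc') (summable_lat _ hu hc)] at this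
    simpa only [Real.norm_eq_abs, add_comm y] using this

noncomputable def qConst : ℝ := (∫ x : Fin 2 → ℝ, 1 / (1 + ‖x‖) ^ 3) + ∑' β : Fin 2 → ℤ, 1 / (1 + ‖latP β‖) ^ 3

lemma quad (n : ℕ) : ∀ (u : (Fin 2 → ℝ) → ℝ) (_ : ContDiff ℝ (⊤ : ℕ∞) u) (_ : HasCompactSupport u)
    (M : ℝ) (_ : ∀ x, ‖iteratedFDeriv ℝ n u x‖ * (1 + ‖x‖) ^ 3 ≤ M), |errQ u| ≤ qConst * 8 ^ n * M := by
  induction n with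
  | zero =>
    intro u hu hc M hM
    have h : ∀ x, ‖u x‖ ≤ M * (1 / (1 + ‖x‖) ^ 3) := fun x => by
      rw [mul_one_div, le_div_iff₀ (by positivity)]
      simpa using hM x
    have h1 := norm_integral_le_of_norm_le (integrable_wt.const_mul M) (Filter.Eventually.of_forall h)
    have h2 := tsum_of_norm_bounded (summable_wt.mul_left M).hasSum (fun β => h (latP β))
    rw [integral_const_mul] at h1
    rw [tsum_mul_left] at h2
    calc |errQ u| ≤ ‖∫ x, u x‖ + ‖∑' β : Fin 2 → ℤ, u (latP β)‖ := by
          rw [errQ, ← Real.norm_eq_abs]; exact norm_sub_le _ _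
      _ ≤ _ := by rw [qConst]; linarith
  | succ n ih =>
    intro u hu hc M hM
    refine errQ_le u hu.continuous hc _ fun y hy => ?_
    have hu' : ContDiff ℝ (⊤ : ℕ∞) fun x => u (x + y) := by fun_prop
    have hc' : HasCompactSupport fun x => u (x + y) := hc.comp_homeomorph (Homeomorph.addRight y)
    have := ih (fun x => u (x + y) - u x) (hu'.sub hu) (hc'.sub hc) (8 * M) ?_
    · calc _ ≤ _ := this
        _ = _ := by ring
    intro x
    have e : iteratedFDeriv ℝ n (fun x => u (x + y) - u x) x = iteratedFDeriv ℝ n u (x + y) - iteratedFDeriv ℝ n u x := by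
      rw [← congrFun (iteratedFDeriv_comp_add_right' (𝕜 := ℝ) (f := u) n y) x]
      exact iteratedFDeriv_sub_apply (hu'.of_le (by exact_mod_cast le_top)).contDiffAt (hu.of_le (by exact_mod_cast le_top)).contDiffAt
    rw [e]
    have hM0 : 0 ≤ M := le_trans (by positivity) (hM 0)
    have hd : ∀ z ∈ segment ℝ x (x + y), ‖fderiv ℝ (iteratedFDeriv ℝ n u) z‖ ≤ 8 * M / (1 + ‖x‖) ^ 3 := by
      intro z hz
      rw [norm_fderiv_iteratedFDeriv, le_div_iff₀ (by positivity)]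
      have hzx : ‖x‖ ≤ ‖z‖ + 1 := by
        obtain ⟨t, ⟨ht0, ht1⟩, rfl⟩ := (segment_eq_image' ℝ x (x + y)) ▸ hz
        simp only [add_sub_cancel_left]
        have : ‖t • y‖ ≤ 1 := by
          rw [norm_smul, Real.norm_eq_abs, abs_of_nonneg ht0]; nlinarith [norm_nonneg y]
        calc ‖x‖ = ‖(x + t • y) - t • y‖ := by simp
          _ ≤ _ := (norm_sub_le _ _).trans (by linarith)
      calc ‖iteratedFDeriv ℝ (n+1) u z‖ * (1 + ‖x‖) ^ 3 ≤ ‖iteratedFDeriv ℝ (n+1) u z‖ * (2 * (1 + ‖z‖)) ^ 3 := by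
            gcongr; linarith [norm_nonneg z]
        _ = 8 * (‖iteratedFDeriv ℝ (n+1) u z‖ * (1 + ‖z‖) ^ 3) := by ring
        _ ≤ _ := by linarith [hM z]
    have := (convex_segment x (x + y)).norm_image_sub_le_of_norm_fderiv_le (𝕜 := ℝ)
      (f := iteratedFDeriv ℝ n u)
      (fun z _ => (hu.differentiable_iteratedFDeriv (m := n) (by exact_mod_cast (WithTop.coe_lt_top _))).differentiableAt) hd
      (left_mem_segment ℝ x (x + y)) (right_mem_segment ℝ x (x + y))
    rw [← le_div_iff₀ (by positivity)]
    refine this.trans ?_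
    simp only [add_sub_cancel_left]
    have : 0 ≤ 8 * M / (1 + ‖x‖) ^ 3 := by positivity
    nlinarith [norm_nonneg y]


/-- uniform symbol classes -/
def SymF {ι : Type} (m : ℕ) (F : ι → (Fin 2 → ℝ) → ℝ) : Prop :=
  (∀ i, ContDiff ℝ (⊤ : ℕ∞) (F i)) ∧ ∀ n : ℕ, ∃ C : ℝ, 0 ≤ C ∧ ∀ i x,
    ‖iteratedFDeriv ℝ n (F i) x‖ * (1 + ‖x‖) ^ n ≤ C * (1 + ‖x‖) ^ m

lemma SymF.mul {ι : Type} {m k : ℕ} {F G : ι → (Fin 2 → ℝ) → ℝ} (hF : SymF m F) (hG : SymF k G) :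
    SymF (m + k) (fun i x => F i x * G i x) := by
  refine ⟨fun i => (hF.1 i).mul (hG.1 i), fun n => ?_⟩
  choose A hA0 hA using hF.2
  choose B hB0 hB using hG.2
  refine ⟨∑ i ∈ Finset.range (n + 1), (n.choose i : ℝ) * A i * B (n - i), Finset.sum_nonneg fun i _ =>
    mul_nonneg (mul_nonneg (by positivity) (hA0 _)) (hB0 _), fun i x => ?_⟩
  have := norm_iteratedFDeriv_mul_le (hF.1 i) (hG.1 i) x (n := n) (by exact_mod_cast le_top)
  refine (mul_le_mul_of_nonneg_right this (by positivity)).trans ?_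
  rw [Finset.sum_mul, Finset.sum_mul]
  refine Finset.sum_le_sum fun j hj => ?_
  have hjn : j + (n - j) = n := by have := Finset.mem_range.mp hj; omega
  calc (n.choose j : ℝ) * ‖iteratedFDeriv ℝ j (F i) x‖ * ‖iteratedFDeriv ℝ (n - j) (G i) x‖ * (1 + ‖x‖) ^ n
      = (n.choose j : ℝ) * ((‖iteratedFDeriv ℝ j (F i) x‖ * (1 + ‖x‖) ^ j) *
        (‖iteratedFDeriv ℝ (n - j) (G i) x‖ * (1 + ‖x‖) ^ (n - j))) := by
        conv_lhs => rw [← hjn, pow_add]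
        rw [hjn]; ring
    _ ≤ (n.choose j : ℝ) * ((A j * (1 + ‖x‖) ^ m) * (B (n - j) * (1 + ‖x‖) ^ k)) := by
        refine mul_le_mul_of_nonneg_left ?_ (by positivity)
        exact mul_le_mul (hA j i x) (hB (n - j) i x) (by positivity) (mul_nonneg (hA0 j) (by positivity))
    _ = _ := by rw [pow_add]; ring

lemma sym_one {ι : Type} : SymF 0 (fun (_ : ι) (_ : Fin 2 → ℝ) => (1 : ℝ)) := by
  refine ⟨fun i => contDiff_const, fun n => ⟨1, zero_le_one, fun i x => ?_⟩⟩
  rcases n with _ | n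
  · simp
  · rw [iteratedFDeriv_const_of_ne (by omega)]; simp

lemma sym_coord {ι : Type} (j : Fin 2) : SymF 1 (fun (_ : ι) (x : Fin 2 → ℝ) => x j) := by
  have hL : ∀ x : Fin 2 → ℝ, fderiv ℝ (fun x : Fin 2 → ℝ => x j) x = ContinuousLinearMap.proj j := fun x =>
    (ContinuousLinearMap.proj (R := ℝ) (φ := fun _ : Fin 2 => ℝ) j).fderiv
  refine ⟨fun i => contDiff_apply ℝ ℝ j, fun n => ⟨1 + ‖(ContinuousLinearMap.proj j : (Fin 2 → ℝ) →L[ℝ] ℝ)‖, by positivity, fun i x => ?_⟩⟩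
  rcases n with _ | n
  · have := norm_le_pi_norm x j
    have h2 : 0 ≤ ‖(ContinuousLinearMap.proj j : (Fin 2 → ℝ) →L[ℝ] ℝ)‖ := norm_nonneg _
    simp only [norm_iteratedFDeriv_zero, pow_zero, mul_one, pow_one]
    nlinarith [norm_nonneg x]
  · rw [← norm_iteratedFDeriv_fderiv, show fderiv ℝ (fun x : Fin 2 → ℝ => x j) = fun _ => ContinuousLinearMap.proj j from funext hL]
    rcases n with _ | n
    · simp only [norm_iteratedFDeriv_zero, pow_one, zero_add]
      gcongr; linarith
    · rw [iteratedFDeriv_const_of_ne (by omega)]; simp; positivity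

lemma SymF.pow {ι : Type} {F : ι → (Fin 2 → ℝ) → ℝ} (hF : SymF 1 F) (a : ℕ) :
    SymF a (fun i x => F i x ^ a) := by
  induction a with
  | zero => simpa using sym_one
  | succ a ih => simpa only [pow_succ] using ih.mul hF

noncomputable def chiB : ContDiffBump (0 : Fin 2 → ℝ) := ⟨1/4, 1/2, by norm_num, by norm_num⟩

lemma euclNorm_smul (t : ℝ) (ht : 0 ≤ t) (x : Fin 2 → ℝ) : euclNorm (t • x) = t * euclNorm x := by
  unfold euclNorm
  simp only [Pi.smul_apply, smul_eq_mul, mul_pow, ← Finset.mul_sum]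
  rw [Real.sqrt_mul (by positivity), Real.sqrt_sq ht]

lemma norm_le_euclNorm (x : Fin 2 → ℝ) : ‖x‖ ≤ euclNorm x := by
  unfold euclNorm
  rw [pi_norm_le_iff_of_nonneg (Real.sqrt_nonneg _)]
  intro j
  apply Real.le_sqrt_of_sq_le
  rw [Real.norm_eq_abs, sq_abs]
  exact Finset.single_le_sum (f := fun j => x j ^ 2) (fun i _ => sq_nonneg _) (Finset.mem_univ j)

lemma euclNorm_pos {x : Fin 2 → ℝ} (hx : x ≠ 0) : 0 < euclNorm x :=
  (norm_pos_iff.mpr hx).trans_le (norm_le_euclNorm x)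

noncomputable def qfun (α : ℝ) (x : Fin 2 → ℝ) : ℝ := (1 - chiB x) * euclNorm x ^ (-(2 + α))

lemma qfun_contDiff (α : ℝ) : ContDiff ℝ (⊤ : ℕ∞) (qfun α) := by
  rw [contDiff_iff_contDiffAt]
  intro x
  by_cases hx : x = 0
  · have : qfun α =ᶠ[nhds x] fun _ => 0 := by
      subst hx
      filter_upwards [Metric.closedBall_mem_nhds (0 : Fin 2 → ℝ) (show (0:ℝ) < 1/4 by norm_num)] with y hy
      have := chiB.one_of_mem_closedBall (x := y) hy
      simp [qfun, this]
    exact contDiffAt_const.congr_of_eventuallyEq this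
  · unfold qfun
    refine (contDiffAt_const.sub chiB.contDiff.contDiffAt).mul ?_
    refine ContDiffAt.rpow_const_of_ne ?_ (euclNorm_pos hx).ne'
    unfold euclNorm
    refine ContDiffAt.sqrt ?_ ?_
    · fun_prop
    · have := euclNorm_pos hx
      unfold euclNorm at this
      exact (Real.sqrt_pos.mp this).ne'

lemma qfun_eq {α : ℝ} {x : Fin 2 → ℝ} (hx : 1 / 2 ≤ ‖x‖) : qfun α x = euclNorm x ^ (-(2 + α)) := by
  have : chiB x = 0 := chiB.zero_of_le_dist (by simpa [chiB] using hx)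
  simp [qfun, this]

lemma qfun_scale {α : ℝ} {x : Fin 2 → ℝ} (hx : 1 / 2 ≤ ‖x‖) {t : ℝ} (ht : 1 ≤ t) :
    qfun α (t • x) = t ^ (-(2 + α)) * qfun α x := by
  rw [qfun_eq hx, qfun_eq, euclNorm_smul _ (by linarith), Real.mul_rpow (by linarith) (show 0 ≤ euclNorm x from Real.sqrt_nonneg _)]
  rw [norm_smul, Real.norm_eq_abs, abs_of_nonneg (by linarith)]
  nlinarith

lemma sym_q {ι : Type} (α : ℝ) (hα : 0 < α) : SymF 0 (fun (_ : ι) => qfun α) := by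
  have hsm := qfun_contDiff α
  refine ⟨fun i => hsm, fun n => ?_⟩
  have hn : ContDiff ℝ n (qfun α) := hsm.of_le (by exact_mod_cast le_top)
  have hcont : Continuous fun x => ‖iteratedFDeriv ℝ n (qfun α) x‖ :=
    (hn.continuous_iteratedFDeriv le_rfl).norm
  obtain ⟨C, hC⟩ := (isCompact_closedBall (0 : Fin 2 → ℝ) 1).bddAbove_image hcont.continuousOn
  have hC' : ∀ x : Fin 2 → ℝ, ‖x‖ ≤ 1 → ‖iteratedFDeriv ℝ n (qfun α) x‖ ≤ C := fun x hx =>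
    hC ⟨x, by simpa using hx, rfl⟩
  have hC0 : 0 ≤ C := (norm_nonneg _).trans (hC' 0 (by simp))
  refine ⟨C * 2 ^ n, by positivity, fun i x => ?_⟩
  rw [pow_zero, mul_one]
  by_cases hx : ‖x‖ ≤ 1
  · have := hC' x hx
    gcongr; linarith
  · push Not at hx
    set t := ‖x‖ with ht
    have ht0 : 0 < t := by linarith
    set y := t⁻¹ • x with hy
    have hxy : x = t • y := by rw [hy, smul_smul, mul_inv_cancel₀ ht0.ne', one_smul]
    have hyn : ‖y‖ = 1 := by rw [hy, norm_smul, norm_inv, Real.norm_eq_abs, abs_of_pos ht0, ← ht, inv_mul_cancel₀ ht0.ne']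
    have e1 := congrFun (iteratedFDeriv_comp_const_smul (i := n) t hn) y
    have e2 : (fun z => qfun α (t • z)) =ᶠ[nhds y] fun z => t ^ (-(2 + α)) • qfun α z := by
      have : {z : Fin 2 → ℝ | 1 / 2 < ‖z‖} ∈ nhds y :=
        (isOpen_lt continuous_const continuous_norm).mem_nhds (by simp [hyn]; norm_num)
      filter_upwards [this] with z hz
      exact qfun_scale hz.le hx.le
    have e3 := (Filter.EventuallyEq.iteratedFDeriv (𝕜 := ℝ) e2 n).eq_of_nhds
    have e4 : iteratedFDeriv ℝ n (fun z => t ^ (-(2 + α)) • qfun α z) y = t ^ (-(2 + α)) • iteratedFDeriv ℝ n (qfun α) y :=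
      iteratedFDeriv_const_smul_apply' hn.contDiffAt
    have e5 : t ^ n • iteratedFDeriv ℝ n (qfun α) x = t ^ (-(2 + α)) • iteratedFDeriv ℝ n (qfun α) y := by
      rw [← e4, ← e3, e1, ← hxy]
    have e6 := congrArg norm e5
    rw [norm_smul, norm_smul, Real.norm_eq_abs, Real.norm_eq_abs, abs_of_pos (by positivity), abs_of_pos (by positivity)] at e6
    have h7 : t ^ (-(2 + α)) ≤ 1 := Real.rpow_le_one_of_one_le_of_nonpos hx.le (by linarith)
    calc ‖iteratedFDeriv ℝ n (qfun α) x‖ * (1 + t) ^ n ≤ ‖iteratedFDeriv ℝ n (qfun α) x‖ * (2 * t) ^ n := by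
          gcongr; linarith
      _ = 2 ^ n * (t ^ n * ‖iteratedFDeriv ℝ n (qfun α) x‖) := by ring
      _ ≤ 2 ^ n * (1 * C) := by
          rw [e6]; gcongr; exact hC' y hyn.le
      _ = _ := by ring

lemma sym_scale0 (φ : (Fin 2 → ℝ) → ℝ) (hφ : ContDiff ℝ (⊤ : ℕ∞) φ) (hc : HasCompactSupport φ) :
    SymF 0 (fun (h : Set.Ioc (0:ℝ) 1) (x : Fin 2 → ℝ) => φ (h.1 • x)) := by
  refine ⟨fun h => hφ.comp (contDiff_const_smul _), fun n => ?_⟩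
  have hn : ContDiff ℝ n φ := hφ.of_le (by exact_mod_cast le_top)
  obtain ⟨C, hC0, hC⟩ := cs_bound (iteratedFDeriv ℝ n φ) (hn.continuous_iteratedFDeriv le_rfl) (hc.iteratedFDeriv n) n
  refine ⟨C, hC0, ?_⟩
  rintro ⟨h, h0, h1⟩ x
  rw [pow_zero, mul_one, congrFun (iteratedFDeriv_comp_const_smul (i := n) h hn) x, norm_smul, norm_pow, Real.norm_eq_abs,
    abs_of_pos h0]
  refine le_trans ?_ (hC (h • x))
  rw [norm_smul, Real.norm_eq_abs, abs_of_pos h0]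
  calc h ^ n * ‖iteratedFDeriv ℝ n φ (h • x)‖ * (1 + ‖x‖) ^ n = ‖iteratedFDeriv ℝ n φ (h • x)‖ * (h * (1 + ‖x‖)) ^ n := by
        rw [mul_pow]; ring
    _ ≤ _ := by gcongr; linarith

lemma sym_scale1 (φ : (Fin 2 → ℝ) → ℝ) (hφ : ContDiff ℝ (⊤ : ℕ∞) φ) (hc : HasCompactSupport φ) (h0 : φ 0 = 0) :
    SymF 1 (fun (h : Set.Ioc (0:ℝ) 1) (x : Fin 2 → ℝ) => h.1⁻¹ • φ (h.1 • x)) := by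
  refine ⟨fun h => (hφ.comp (contDiff_const_smul _)).const_smul _, fun n => ?_⟩
  have hn : ContDiff ℝ n φ := hφ.of_le (by exact_mod_cast le_top)
  have hn' : ∀ h : ℝ, ContDiff ℝ n (fun x => φ (h • x)) := fun h => hn.comp (contDiff_const_smul _)
  rcases n with _ | n
  · have h1 : ContDiff ℝ 1 φ := hφ.of_le (by exact_mod_cast le_top)
    obtain ⟨K, hK⟩ := h1.lipschitzWith_of_hasCompactSupport hc one_ne_zero
    refine ⟨K, K.2, ?_⟩
    rintro ⟨h, hh0, hh1⟩ x
    have := hK.norm_sub_le (h • x) 0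
    rw [h0, sub_zero, sub_zero, norm_smul, Real.norm_eq_abs h, abs_of_pos hh0] at this
    simp only [norm_iteratedFDeriv_zero, pow_zero, mul_one, pow_one]
    rw [norm_smul, norm_inv, Real.norm_eq_abs h, abs_of_pos hh0, inv_mul_le_iff₀ hh0]
    have hK0 : (0:ℝ) ≤ K := K.2
    have : 0 ≤ h * K := by positivity
    linarith
  · obtain ⟨C, hC0, hC⟩ := cs_bound (iteratedFDeriv ℝ (n+1) φ) (hn.continuous_iteratedFDeriv le_rfl) (hc.iteratedFDeriv (n+1)) n
    refine ⟨C, hC0, ?_⟩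
    rintro ⟨h, h0, h1⟩ x
    have e := congrFun (iteratedFDeriv_comp_const_smul (i := n+1) h hn) x
    rw [iteratedFDeriv_const_smul_apply' (hn' h).contDiffAt, e, norm_smul, norm_smul, norm_pow, norm_inv, Real.norm_eq_abs,
      abs_of_pos h0, pow_one, pow_succ (1 + ‖x‖), ← mul_assoc]
    refine mul_le_mul_of_nonneg_right ?_ (by positivity)
    refine le_trans ?_ (hC (h • x))
    rw [norm_smul, Real.norm_eq_abs, abs_of_pos h0]
    calc h⁻¹ * (h ^ (n+1) * ‖iteratedFDeriv ℝ (n+1) φ (h • x)‖) * (1 + ‖x‖) ^ n = ‖iteratedFDeriv ℝ (n+1) φ (h • x)‖ * (h * (1 + ‖x‖)) ^ n := by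
          rw [pow_succ, mul_pow]; field_simp
      _ ≤ _ := by gcongr; linarith


noncomputable def Kf (α : ℝ) (a b : ℕ) (x : Fin 2 → ℝ) : ℝ :=
  x 0 ^ a * x 1 ^ b * euclNorm x ^ (-(2 + α))

noncomputable def Gf (α : ℝ) (φ : (Fin 2 → ℝ) → ℝ) (a b : ℕ) (h : ℝ) : ℝ :=
  (∫ x, φ (h • x) * Kf α a b x) - ∑' β : Fin 2 → ℤ, φ (h • latP β) * Kf α a b (latP β)

lemma Kf_meas (α : ℝ) (a b : ℕ) : Measurable (Kf α a b) := by
  unfold Kf euclNorm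
  fun_prop

lemma Kf_zero {α : ℝ} (hα : 0 < α) (a b : ℕ) : Kf α a b 0 = 0 := by
  have : euclNorm (0 : Fin 2 → ℝ) = 0 := by simp [euclNorm]
  rw [Kf, this, Real.zero_rpow (by linarith), mul_zero]

lemma Kf_int {α : ℝ} (hα : 0 < α) (hα2 : α < 2) {a b : ℕ} (hab : 2 ≤ a + b) (R : ℝ) :
    IntegrableOn (Kf α a b) (Metric.ball 0 R) := by
  refine integrableOn_ball_of_norm_le_rpow (C := R ^ (a + b - 2)) (α := α) (by simp) (by simpa using hα2) ?_
    (Kf_meas α a b).aestronglyMeasurable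
  refine (ae_restrict_iff' measurableSet_ball).mpr (Filter.Eventually.of_forall fun x hx => ?_)
  have hxR : ‖x‖ < R := by simpa using hx
  by_cases h0 : x = 0
  · rw [h0, Kf_zero hα, norm_zero]
    have : 0 ≤ R := (norm_nonneg _).trans hxR.le
    positivity
  have hp : 0 < ‖x‖ := norm_pos_iff.mpr h0
  have h1 := norm_le_euclNorm x
  have h2 : euclNorm x ^ (-(2 + α)) ≤ ‖x‖ ^ (-(2 + α)) :=
    Real.rpow_le_rpow_of_nonpos hp h1 (by linarith)
  have h3 : 0 ≤ euclNorm x ^ (-(2 + α)) := Real.rpow_nonneg (Real.sqrt_nonneg _) _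
  have h4 : ‖x‖ ^ (a + b) = ‖x‖ ^ (a + b - 2) * ‖x‖ ^ (2 : ℝ) := by
    rw [Real.rpow_two, ← pow_add]; congr 1; omega
  rw [Kf, norm_mul, norm_mul, norm_pow, norm_pow, Real.norm_of_nonneg h3]
  calc ‖x 0‖ ^ a * ‖x 1‖ ^ b * euclNorm x ^ (-(2 + α)) ≤ ‖x‖ ^ a * ‖x‖ ^ b * ‖x‖ ^ (-(2 + α)) := by
        gcongr <;> exact norm_le_pi_norm x _
    _ = ‖x‖ ^ (a + b - 2) * ‖x‖ ^ (-α) := by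
        rw [← pow_add, h4, mul_assoc, ← Real.rpow_add hp]; congr 2; ring
    _ ≤ _ := by gcongr

lemma cs_ball {φ : (Fin 2 → ℝ) → ℝ} (hc : HasCompactSupport φ) : ∃ R : ℝ, 0 < R ∧ ∀ x, R ≤ ‖x‖ → φ x = 0 := by
  obtain ⟨R, hR⟩ := hc.isCompact.isBounded.subset_ball (0 : Fin 2 → ℝ)
  refine ⟨max R 1, by positivity, fun x hx => ?_⟩
  by_contra h
  have := hR (subset_tsupport _ (show x ∈ Function.support φ from h))
  simp at this
  exact absurd (le_max_left R 1) (by linarith)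

lemma int_mul {α : ℝ} (hα : 0 < α) (hα2 : α < 2) {a b : ℕ} (hab : 2 ≤ a + b) {ψ : (Fin 2 → ℝ) → ℝ}
    (hψ : Continuous ψ) (hc : HasCompactSupport ψ) : Integrable (fun x => ψ x * Kf α a b x) := by
  obtain ⟨R, hR0, hR⟩ := cs_ball hc
  obtain ⟨M, hM⟩ := hψ.bounded_above_of_compact_support hc
  rw [← integrableOn_iff_integrable_of_support_subset (s := Metric.ball 0 R)]
  · exact (Kf_int hα hα2 hab R).bdd_mul hψ.aestronglyMeasurable (Filter.Eventually.of_forall hM)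
  · intro x hx
    by_contra h
    simp at h
    exact hx (by simp [hR x h])

lemma cs_smul {φ : (Fin 2 → ℝ) → ℝ} (hc : HasCompactSupport φ) {h : ℝ} (hh : h ≠ 0) :
    HasCompactSupport fun x => φ (h • x) := hc.comp_smul hh

lemma lat_fin (R : ℝ) : {β : Fin 2 → ℤ | ‖latP β‖ < R}.Finite := by
  have := (isCompact_closedBall (0 : Fin 2 → ℤ) R).finite_of_discrete
  refine this.subset fun β hβ => ?_
  have h : ‖latP β‖ < R := hβ
  rw [norm_latP] at h
  simpa using h.le

lemma sum_mul' {α : ℝ} {a b : ℕ} {ψ : (Fin 2 → ℝ) → ℝ} (hc : HasCompactSupport ψ) :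
    Summable (fun β => ψ (latP β) * Kf α a b (latP β)) := by
  obtain ⟨R, hR0, hR⟩ := cs_ball hc
  refine summable_of_hasFiniteSupport ((lat_fin R).subset fun β hβ => ?_)
  by_contra h
  simp at h
  exact hβ (by simp [hR _ h])

lemma bound_gen {α : ℝ} (hα : 0 < α) (hα2 : α < 2) {a b : ℕ} (hab : 2 ≤ a + b) {ι : Type} {r : ℕ}
    {ψ : ι → (Fin 2 → ℝ) → ℝ} (hψ : SymF r ψ) (hc : ∀ i, HasCompactSupport (ψ i)) :
    ∃ C, 0 ≤ C ∧ ∀ i, |(∫ x, ψ i x * Kf α a b x) - ∑' β : Fin 2 → ℤ, ψ i (latP β) * Kf α a b (latP β)| ≤ C := by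
  have hS : SymF (r + (a + (b + 0))) (fun i x => ψ i x * (x 0 ^ a * (x 1 ^ b * qfun α x))) :=
    hψ.mul (((sym_coord 0).pow a).mul (((sym_coord 1).pow b).mul (sym_q α hα)))
  obtain ⟨C1, hC10, hC1⟩ := hS.2 (r + (a + (b + 0)) + 3)
  obtain ⟨C0, hC00, hC0⟩ := hψ.2 0
  have hq0 : 0 ≤ qConst := add_nonneg (integral_nonneg fun x => by positivity) (tsum_nonneg fun β => by positivity)
  have hI0 : 0 ≤ ∫ x in Metric.ball 0 1, C0 * 2 ^ r * ‖Kf α a b x‖ := integral_nonneg fun x => by positivity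
  refine ⟨qConst * 8 ^ (r + (a + (b + 0)) + 3) * C1 + ∫ x in Metric.ball 0 1, C0 * 2 ^ r * ‖Kf α a b x‖, by positivity, fun i => ?_⟩
  set u : (Fin 2 → ℝ) → ℝ := fun x => ψ i x * (x 0 ^ a * (x 1 ^ b * qfun α x)) with hu
  have hquad := quad (r + (a + (b + 0)) + 3) u (hS.1 i) (hc i).mul_right C1 (by
    intro x
    have := hC1 i x
    rw [pow_add _ (r + (a + (b + 0))) 3, ← mul_assoc, mul_right_comm] at this
    exact le_of_mul_le_mul_right this (by positivity))
  have hu1 : ∀ x, u x = ψ i x * Kf α a b x - ψ i x * chiB x * Kf α a b x := fun x => by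
    simp only [hu, qfun, Kf]; ring
  have hlat : ∀ β, ψ i (latP β) * Kf α a b (latP β) = u (latP β) := fun β => by
    rw [hu1]
    by_cases hβ : β = 0
    · have : latP β = 0 := by subst hβ; funext j; simp [latP]
      rw [this, Kf_zero hα]; simp
    · have h1 : 1 ≤ ‖latP β‖ := by
        rw [norm_latP]
        obtain ⟨j, hj⟩ := Function.ne_iff.mp hβ
        refine le_trans ?_ (norm_le_pi_norm β j)
        rw [Int.norm_eq_abs]
        exact_mod_cast Int.one_le_abs hj
      have : chiB (latP β) = 0 := chiB.zero_of_le_dist (by simp [chiB]; linarith)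
      rw [this]; ring
  have hcc := (hψ.1 i).continuous
  have hch : Continuous chiB := chiB.continuous
  have i1 := int_mul hα hα2 hab hcc (hc i)
  have i2 := int_mul hα hα2 hab (hcc.mul hch) (hc i).mul_right
  simp only [Pi.mul_apply] at i2
  have e : (∫ x, ψ i x * Kf α a b x) - ∑' β : Fin 2 → ℤ, ψ i (latP β) * Kf α a b (latP β)
      = errQ u + ∫ x, ψ i x * chiB x * Kf α a b x := by
    rw [errQ, tsum_congr hlat, integral_congr_ae (Filter.Eventually.of_forall hu1), integral_sub i1 i2]
    ring
  rw [e]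
  refine (abs_add_le _ _).trans (add_le_add hquad ?_)
  have hsupp : ∀ x, x ∉ Metric.ball (0 : Fin 2 → ℝ) 1 → ψ i x * chiB x * Kf α a b x = 0 := fun x hx => by
    have : chiB x = 0 := chiB.zero_of_le_dist (by simp [chiB] at hx ⊢; linarith)
    simp [this]
  rw [← setIntegral_eq_integral_of_forall_compl_eq_zero hsupp, ← Real.norm_eq_abs]
  refine norm_integral_le_of_norm_le ((Kf_int hα hα2 hab 1).norm.const_mul _) ?_
  refine (ae_restrict_iff' measurableSet_ball).mpr (Filter.Eventually.of_forall fun x hx => ?_)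
  have hx1 : ‖x‖ < 1 := by simpa using hx
  have h1 := hC0 i x
  simp only [norm_iteratedFDeriv_zero, pow_zero, mul_one] at h1
  rw [norm_mul, norm_mul]
  refine mul_le_mul_of_nonneg_right ?_ (norm_nonneg _)
  have h2 : ‖chiB x‖ ≤ 1 := by rw [Real.norm_of_nonneg chiB.nonneg]; exact chiB.le_one
  calc ‖ψ i x‖ * ‖chiB x‖ ≤ (C0 * (1 + ‖x‖) ^ r) * 1 := by gcongr
    _ ≤ _ := by rw [mul_one]; gcongr; linarith

lemma G_bound0 {α : ℝ} (hα : 0 < α) (hα2 : α < 2) {a b : ℕ} (hab : 2 ≤ a + b) {φ : (Fin 2 → ℝ) → ℝ}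
    (hφ : ContDiff ℝ (⊤ : ℕ∞) φ) (hc : HasCompactSupport φ) :
    ∃ C, 0 ≤ C ∧ ∀ h : ℝ, 0 < h → h ≤ 1 → |Gf α φ a b h| ≤ C := by
  obtain ⟨C, h0, hC⟩ := bound_gen hα hα2 hab (sym_scale0 φ hφ hc) (fun h => cs_smul hc h.2.1.ne')
  exact ⟨C, h0, fun h h1 h2 => hC ⟨h, h1, h2⟩⟩

lemma G_bound1 {α : ℝ} (hα : 0 < α) (hα2 : α < 2) {a b : ℕ} (hab : 2 ≤ a + b) {φ : (Fin 2 → ℝ) → ℝ}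
    (hφ : ContDiff ℝ (⊤ : ℕ∞) φ) (hc : HasCompactSupport φ) (hz : φ 0 = 0) :
    ∃ C, 0 ≤ C ∧ ∀ h : ℝ, 0 < h → h ≤ 1 → |Gf α φ a b h| ≤ C * h := by
  obtain ⟨C, h0, hC⟩ := bound_gen hα hα2 hab (sym_scale1 φ hφ hc hz)
    (fun h => (cs_smul hc h.2.1.ne').comp_left (g := fun y => h.1⁻¹ • y) (by simp))
  refine ⟨C, h0, fun h h1 h2 => ?_⟩
  have := hC ⟨h, h1, h2⟩
  simp only [smul_eq_mul, mul_assoc] at this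
  rw [integral_const_mul, tsum_mul_left, ← mul_sub, abs_mul, abs_of_pos (by positivity), inv_mul_le_iff₀ h1] at this
  rw [mul_comm]
  exact this

lemma G_bound_odd {α : ℝ} (hα : 0 < α) (hα2 : α < 2) {a b : ℕ} (hab : 2 ≤ a + b) {φ : (Fin 2 → ℝ) → ℝ}
    (hφ : ContDiff ℝ (⊤ : ℕ∞) φ) (hc : HasCompactSupport φ) (hz : φ 0 = 0 ∨ Odd (a + b)) :
    ∃ C, 0 ≤ C ∧ ∀ h : ℝ, 0 < h → h ≤ 1 → |Gf α φ a b h| ≤ C * h := by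
  rcases hz with hz | hz
  · exact G_bound1 hα hα2 hab hφ hc hz
  have hφn : ContDiff ℝ (⊤ : ℕ∞) fun x => φ (-x) := hφ.comp contDiff_neg
  have hcn : HasCompactSupport fun x => φ (-x) := hc.comp_homeomorph (Homeomorph.neg _)
  obtain ⟨C, h0, hC⟩ := G_bound1 hα hα2 hab (φ := fun x => φ x - φ (-x)) (hφ.sub hφn) (hc.sub hcn) (by simp)
  refine ⟨C, h0, fun h h1 h2 => ?_⟩
  have hK : ∀ x, Kf α a b (-x) = - Kf α a b x := fun x => by
    have : euclNorm (-x) = euclNorm x := by simp [euclNorm]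
    rw [Kf, Kf, this]
    simp only [Pi.neg_apply]
    rw [neg_pow (x 0), neg_pow (x 1)]
    have : (-1 : ℝ) ^ a * (-1) ^ b = -1 := by rw [← pow_add]; exact hz.neg_one_pow
    linear_combination (x 0 ^ a * x 1 ^ b * euclNorm x ^ (-(2 + α))) * this
  have hs := cs_smul hc h1.ne'
  have hsn := cs_smul hcn h1.ne'
  have hcont : Continuous fun x => φ (h • x) := hφ.continuous.comp (continuous_const_smul h)
  have hcontn : Continuous fun x => φ (-(h • x)) := hφn.continuous.comp (continuous_const_smul h)
  have e1 : ∫ x, φ (-(h • x)) * Kf α a b x = - ∫ x, φ (h • x) * Kf α a b x := by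
    rw [← integral_neg_eq_self, ← integral_neg]
    congr 1; funext x; rw [hK]; simp
  have e2 : ∑' β : Fin 2 → ℤ, φ (-(h • latP β)) * Kf α a b (latP β) = - ∑' β : Fin 2 → ℤ, φ (h • latP β) * Kf α a b (latP β) := by
    rw [← (Equiv.neg (Fin 2 → ℤ)).tsum_eq, ← tsum_neg]
    congr 1; funext β
    have : latP (-β) = - latP β := by funext j; simp [latP]
    simp only [Equiv.neg_apply, this, hK]; simp
  have : Gf α (fun x => φ x - φ (-x)) a b h = 2 * Gf α φ a b h := by
    simp only [Gf, sub_mul]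
    rw [integral_sub (int_mul hα hα2 hab hcont hs) (int_mul hα hα2 hab hcontn hsn), 
      Summable.tsum_sub (sum_mul' hs) (sum_mul' hsn), e1, e2]
    ring
  have h3 := hC h h1 h2
  rw [this, abs_mul, abs_two] at h3
  linarith [abs_nonneg (Gf α φ a b h)]


lemma pd_smooth {φ : (Fin 2 → ℝ) → ℝ} (hφ : ContDiff ℝ (⊤ : ℕ∞) φ) (j : Fin 2) : ContDiff ℝ (⊤ : ℕ∞) (pd j φ) := by
  unfold pd
  exact (hφ.fderiv_right (m := (⊤ : ℕ∞)) (by exact_mod_cast le_rfl)).clm_apply contDiff_const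

lemma pd_cs {φ : (Fin 2 → ℝ) → ℝ} (hc : HasCompactSupport φ) (j : Fin 2) : HasCompactSupport (pd j φ) := by
  unfold pd
  exact (hc.fderiv ℝ).comp_left (g := fun L : (Fin 2 → ℝ) →L[ℝ] ℝ => L (Pi.single j 1)) (by simp)

lemma pd_comm {φ : (Fin 2 → ℝ) → ℝ} (hφ : ContDiff ℝ (⊤ : ℕ∞) φ) (i j : Fin 2) : pd i (pd j φ) = pd j (pd i φ) := by
  have h2 : ContDiff ℝ 2 φ := (contDiff_infty.mp hφ) 2
  have hd : Differentiable ℝ (fderiv ℝ φ) := 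
    (hφ.fderiv_right (m := (⊤ : ℕ∞)) (by exact_mod_cast le_rfl)).differentiable (by simp)
  funext x
  have key : ∀ i j : Fin 2, pd i (pd j φ) x = fderiv ℝ (fderiv ℝ φ) x (Pi.single i 1) (Pi.single j 1) := by
    intro i j
    unfold pd
    rw [fderiv_clm_apply (hd x) (differentiableAt_const _)]
    simp
  rw [key, key]
  exact (h2.contDiffAt.isSymmSndFDerivAt (by simp)) _ _

lemma pd_iter_comm (n : ℕ) : ∀ {φ : (Fin 2 → ℝ) → ℝ}, ContDiff ℝ (⊤ : ℕ∞) φ → 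
    (pd 1)^[n] (pd 0 φ) = pd 0 ((pd 1)^[n] φ) := by
  induction n with
  | zero => intro φ _; rfl
  | succ n ih =>
    intro φ hφ
    rw [Function.iterate_succ_apply, Function.iterate_succ_apply, pd_comm hφ, ih (pd_smooth hφ 1)]

lemma md_two (l : Fin 2 → ℕ) (φ : (Fin 2 → ℝ) → ℝ) : md l φ = (pd 0)^[l 0] ((pd 1)^[l 1] φ) := by
  simp [md, List.finRange_succ]

def VD (q : ℕ) (φ : (Fin 2 → ℝ) → ℝ) : Prop := ∀ l : Fin 2 → ℕ, ∑ j, l j = q → md l φ 0 = 0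

lemma VD_pd {q : ℕ} {φ : (Fin 2 → ℝ) → ℝ} (hφ : ContDiff ℝ (⊤ : ℕ∞) φ) (h : VD (q + 1) φ) (j : Fin 2) : VD q (pd j φ) := by
  intro l hl
  simp only [Fin.sum_univ_two] at hl
  fin_cases j
  · have := h ![l 0 + 1, l 1] (by simp; omega)
    simp only [md_two, Matrix.cons_val_zero, Matrix.cons_val_one, Fin.zero_eta] at this ⊢
    rw [pd_iter_comm _ hφ]
    exact this
  · have := h ![l 0, l 1 + 1] (by simp; omega)
    simp only [md_two, Matrix.cons_val_zero, Matrix.cons_val_one, Fin.mk_one] at this ⊢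
    exact this

lemma VD_zero {φ : (Fin 2 → ℝ) → ℝ} (h : VD 0 φ) : φ 0 = 0 := by
  simpa [md_two] using h 0 (by simp)

lemma Kf_succ0 (α : ℝ) (a b : ℕ) (x) : Kf α (a + 1) b x = x 0 * Kf α a b x := by
  simp only [Kf]; ring
lemma Kf_succ1 (α : ℝ) (a b : ℕ) (x) : Kf α a (b + 1) x = x 1 * Kf α a b x := by
  simp only [Kf]; ring

lemma deriv_pt {φ : (Fin 2 → ℝ) → ℝ} (hφ : ContDiff ℝ (⊤ : ℕ∞) φ) (α : ℝ) (a b : ℕ) (x : Fin 2 → ℝ) (h : ℝ) :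
    HasDerivAt (fun h : ℝ => φ (h • x) * Kf α a b x)
      (pd 0 φ (h • x) * Kf α (a + 1) b x + pd 1 φ (h • x) * Kf α a (b + 1) x) h := by
  have h1 : HasFDerivAt φ (fderiv ℝ φ (h • x)) (h • x) :=
    ((hφ.differentiable (by simp)) _).hasFDerivAt
  have h2 : HasDerivAt (fun h : ℝ => h • x) ((1 : ℝ) • x) h := (hasDerivAt_id h).smul_const x
  have h3 := (h1.comp_hasDerivAt h h2).mul_const (Kf α a b x)
  have hx : x = x 0 • Pi.single 0 1 + x 1 • Pi.single 1 1 := by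
    funext j; fin_cases j <;> simp
  have e : fderiv ℝ φ (h • x) ((1 : ℝ) • x) = x 0 * pd 0 φ (h • x) + x 1 * pd 1 φ (h • x) := by
    rw [one_smul]
    conv_lhs => enter [2]; rw [hx]
    rw [map_add, map_smul, map_smul]; rfl
  rw [e] at h3
  refine HasDerivAt.congr_deriv h3 ?_
  rw [Kf_succ0, Kf_succ1]; ring

lemma G_deriv {α : ℝ} (hα : 0 < α) (hα2 : α < 2) {a b : ℕ} (hab : 2 ≤ a + b) {φ : (Fin 2 → ℝ) → ℝ}
    (hφ : ContDiff ℝ (⊤ : ℕ∞) φ) (hc : HasCompactSupport φ) {h : ℝ} (hh : 0 < h) :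
    HasDerivAt (Gf α φ a b) (Gf α (pd 0 φ) (a + 1) b h + Gf α (pd 1 φ) a (b + 1) h) h := by
  have s0 := pd_smooth hφ 0
  have s1 := pd_smooth hφ 1
  have c0 := pd_cs hc 0
  have c1 := pd_cs hc 1
  obtain ⟨R, hR0, hR⟩ := cs_ball hc
  obtain ⟨R1, hR10, hR1⟩ := cs_ball c0
  obtain ⟨R2, hR20, hR2⟩ := cs_ball c1
  obtain ⟨M1, hM1⟩ := s0.continuous.bounded_above_of_compact_support c0
  obtain ⟨M2, hM2⟩ := s1.continuous.bounded_above_of_compact_support c1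
  have hs : Set.Ioi (h / 2) ∈ nhds h := Ioi_mem_nhds (by linarith)
  have far : ∀ (r : ℝ) (x : Fin 2 → ℝ) (t : ℝ), t ∈ Set.Ioi (h / 2) → 2 * r / h ≤ ‖x‖ → r ≤ ‖t • x‖ := by
    intro r x t ht hx
    have ht' : h / 2 < t := ht
    rw [div_le_iff₀ hh] at hx
    rw [norm_smul, Real.norm_eq_abs, abs_of_pos (by linarith)]
    nlinarith [norm_nonneg x]
  have hcont : ∀ {ψ : (Fin 2 → ℝ) → ℝ}, ContDiff ℝ (⊤ : ℕ∞) ψ → ∀ t : ℝ, Continuous fun x => ψ (t • x) :=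
    fun hψ t => hψ.continuous.comp (continuous_const_smul t)
  have i0 := int_mul hα hα2 (show 2 ≤ (a + 1) + b by omega) (hcont s0 h) (cs_smul c0 hh.ne')
  have i1 := int_mul hα hα2 (show 2 ≤ a + (b + 1) by omega) (hcont s1 h) (cs_smul c1 hh.ne')
  have hI : HasDerivAt (fun h => ∫ x, φ (h • x) * Kf α a b x)
      ((∫ x, pd 0 φ (h • x) * Kf α (a + 1) b x) + ∫ x, pd 1 φ (h • x) * Kf α a (b + 1) x) h := by
    rw [← integral_add i0 i1]
    refine (hasDerivAt_integral_of_dominated_loc_of_deriv_le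
      (F' := fun h x => pd 0 φ (h • x) * Kf α (a + 1) b x + pd 1 φ (h • x) * Kf α a (b + 1) x)
      (bound := fun x => (Metric.ball 0 (2 * R1 / h)).indicator (fun x => M1 * ‖Kf α (a + 1) b x‖) x
        + (Metric.ball 0 (2 * R2 / h)).indicator (fun x => M2 * ‖Kf α a (b + 1) x‖) x)
      hs (Filter.Eventually.of_forall fun t => ((hcont hφ t).measurable.mul (Kf_meas α a b)).aestronglyMeasurable)
      (int_mul hα hα2 hab (hcont hφ h) (cs_smul hc hh.ne')) (i0.add i1).aestronglyMeasurable ?_ ?_ ?_).2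
    · refine Filter.Eventually.of_forall fun x t ht => ?_
      refine (norm_add_le _ _).trans (add_le_add ?_ ?_)
      · by_cases hx : x ∈ Metric.ball (0 : Fin 2 → ℝ) (2 * R1 / h)
        · rw [Set.indicator_of_mem hx, norm_mul]
          exact mul_le_mul_of_nonneg_right (hM1 _) (norm_nonneg _)
        · rw [Set.indicator_of_notMem hx, hR1 _ (far R1 x t ht (by simpa using hx))]; simp
      · by_cases hx : x ∈ Metric.ball (0 : Fin 2 → ℝ) (2 * R2 / h)
        · rw [Set.indicator_of_mem hx, norm_mul]
          exact mul_le_mul_of_nonneg_right (hM2 _) (norm_nonneg _)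
        · rw [Set.indicator_of_notMem hx, hR2 _ (far R2 x t ht (by simpa using hx))]; simp
    · refine Integrable.add ?_ ?_
      · exact (integrable_indicator_iff measurableSet_ball).mpr ((Kf_int hα hα2 (by omega) _).norm.const_mul _)
      · exact (integrable_indicator_iff measurableSet_ball).mpr ((Kf_int hα hα2 (by omega) _).norm.const_mul _)
    · exact Filter.Eventually.of_forall fun x t _ => deriv_pt hφ α a b x t
  have hS : HasDerivAt (fun h => ∑' β : Fin 2 → ℤ, φ (h • latP β) * Kf α a b (latP β))
      ((∑' β : Fin 2 → ℤ, pd 0 φ (h • latP β) * Kf α (a + 1) b (latP β)) + 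
        ∑' β : Fin 2 → ℤ, pd 1 φ (h • latP β) * Kf α a (b + 1) (latP β)) h := by
    rw [← (sum_mul' (cs_smul c0 hh.ne')).tsum_add (sum_mul' (cs_smul c1 hh.ne'))]
    set T := max R (max R1 R2) with hT
    have fin := lat_fin (2 * T / h)
    set S := fin.toFinset with hSdef
    have hmem : ∀ β, β ∉ S → 2 * T / h ≤ ‖latP β‖ := fun β hβ => by simpa [hSdef] using hβ
    have hle : ∀ r : ℝ, r ≤ T → ∀ β, β ∉ S → 2 * r / h ≤ ‖latP β‖ := fun r hr β hβ =>
      le_trans (by gcongr) (hmem β hβ)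
    have e1 : (fun h => ∑' β : Fin 2 → ℤ, φ (h • latP β) * Kf α a b (latP β)) =ᶠ[nhds h]
        fun h => ∑ β ∈ S, φ (h • latP β) * Kf α a b (latP β) := by
      filter_upwards [hs] with t ht
      refine tsum_eq_sum fun β hβ => ?_
      rw [hR _ (far R _ t ht (hle R (by simp [hT]) β hβ)), zero_mul]
    have hhs : h ∈ Set.Ioi (h / 2) := mem_of_mem_nhds hs
    have e2 : (∑' β : Fin 2 → ℤ, (pd 0 φ (h • latP β) * Kf α (a + 1) b (latP β) + pd 1 φ (h • latP β) * Kf α a (b + 1) (latP β))) =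
        ∑ β ∈ S, (pd 0 φ (h • latP β) * Kf α (a + 1) b (latP β) + pd 1 φ (h • latP β) * Kf α a (b + 1) (latP β)) := by
      refine tsum_eq_sum fun β hβ => ?_
      rw [hR1 _ (far R1 _ h hhs (hle R1 (by simp [hT]) β hβ)), hR2 _ (far R2 _ h hhs (hle R2 (by simp [hT]) β hβ))]
      simp
    rw [e2]
    exact (HasDerivAt.fun_sum fun β _ => deriv_pt hφ α a b (latP β) h).congr_of_eventuallyEq e1
  have := hI.sub hS
  refine this.congr_deriv ?_
  simp only [Gf]; ring

lemma calc_lim {D D' : ℝ → ℝ} {C : ℝ} {N : ℕ} (hC : 0 ≤ C) (hd : ∀ h, 0 < h → HasDerivAt D (D' h) h)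
    (hb : ∀ h, 0 < h → h ≤ 1 → |D' h| ≤ C * h ^ N) : ∃ L, ∀ h, 0 < h → h ≤ 1 → |D h - L| ≤ C * h ^ (N + 1) := by
  have key : ∀ s t, 0 < s → s ≤ t → t ≤ 1 → |D t - D s| ≤ C * t ^ N * (t - s) := by
    intro s t hs hst ht
    have := (convex_Icc s t).norm_image_sub_le_of_norm_hasDerivWithin_le (f := D) (f' := D') (C := C * t ^ N)
      (fun x hx => (hd x (hs.trans_le hx.1)).hasDerivWithinAt)
      (fun x hx => (hb x (hs.trans_le hx.1) (hx.2.trans ht)).trans (by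
        have := hs.trans_le hx.1
        gcongr; exact hx.2)) (Set.left_mem_Icc.mpr hst) (Set.right_mem_Icc.mpr hst)
    rwa [Real.norm_eq_abs, Real.norm_of_nonneg (by linarith)] at this
  have lip : LipschitzOnWith (Real.toNNReal C) D (Set.Ioc 0 1) := by
    have main : ∀ s t, 0 < s → s ≤ t → t ≤ 1 → |D t - D s| ≤ C * |t - s| := fun s t hs hst ht => by
      refine (key s t hs hst ht).trans ?_
      rw [abs_of_nonneg (by linarith)]
      have h0 : 0 ≤ t - s := by linarith
      have : t ^ N ≤ 1 := pow_le_one₀ (by linarith) ht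
      gcongr
      nlinarith
    refine LipschitzOnWith.of_dist_le_mul fun x hx y hy => ?_
    rw [Real.coe_toNNReal _ hC, Real.dist_eq, Real.dist_eq]
    rcases le_total y x with h | h
    · exact main y x hy.1 h hx.2
    · rw [abs_sub_comm, abs_sub_comm x]; exact main x y hx.1 h hy.2
  obtain ⟨g, hg, hgD⟩ := lip.extend_real
  refine ⟨g 0, fun h h0 h1 => ?_⟩
  have ht : Filter.Tendsto (fun s => |D h - g s|) (nhdsWithin 0 (Set.Ioi 0)) (nhds |D h - g 0|) :=
    ((continuous_const.sub hg.continuous).abs.tendsto 0).mono_left nhdsWithin_le_nhds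
  refine le_of_tendsto ht ?_
  filter_upwards [Ioo_mem_nhdsGT h0] with s hs
  rw [← hgD ⟨hs.1, hs.2.le.trans h1⟩]
  refine (key s h hs.1 hs.2.le h1).trans ?_
  rw [pow_succ, ← mul_assoc]
  gcongr
  linarith [hs.1]

lemma expansion {α : ℝ} (hα : 0 < α) (hα2 : α < 2) (N : ℕ) : ∀ {a b : ℕ} (_ : 2 ≤ a + b) {φ : (Fin 2 → ℝ) → ℝ}
    (_ : ContDiff ℝ (⊤ : ℕ∞) φ) (_ : HasCompactSupport φ), ∃ (c : ℕ → ℝ) (C : ℝ), 0 ≤ C ∧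
      (∀ h : ℝ, 0 < h → h ≤ 1 → |Gf α φ a b h - ∑ q ∈ Finset.range N, c q * h ^ q| ≤ C * h ^ N) ∧
      ∀ q < N, (VD q φ ∨ Odd (a + b + q)) → c q = 0 := by
  induction N with
  | zero =>
    intro a b hab φ hφ hc
    obtain ⟨C, h0, hC⟩ := G_bound0 hα hα2 hab hφ hc
    exact ⟨0, C, h0, by simpa using hC, by simp⟩
  | succ N ih =>
    intro a b hab φ hφ hc
    obtain ⟨c0, C0, hC00, hC0, hz0⟩ := ih (show 2 ≤ (a + 1) + b by omega) (pd_smooth hφ 0) (pd_cs hc 0)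
    obtain ⟨c1, C1, hC10, hC1, hz1⟩ := ih (show 2 ≤ a + (b + 1) by omega) (pd_smooth hφ 1) (pd_cs hc 1)
    have hpoly : ∀ h : ℝ, HasDerivAt (fun h : ℝ => ∑ q ∈ Finset.range N, (c0 q + c1 q) / (q + 1) * h ^ (q + 1))
        (∑ q ∈ Finset.range N, (c0 q + c1 q) * h ^ q) h := fun h => by
      refine HasDerivAt.fun_sum fun q _ => ?_
      have := (hasDerivAt_pow (q + 1) h).const_mul ((c0 q + c1 q) / (q + 1))
      refine this.congr_deriv ?_
      have : (q : ℝ) + 1 ≠ 0 := by positivity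
      simp only [Nat.add_sub_cancel]; push_cast
      field_simp
    obtain ⟨L, hL⟩ := calc_lim (N := N) (add_nonneg hC00 hC10) (fun h hh => (G_deriv hα hα2 hab hφ hc hh).sub (hpoly h)) (by
      intro h h0 h1
      have e : Gf α (pd 0 φ) (a + 1) b h + Gf α (pd 1 φ) a (b + 1) h - ∑ q ∈ Finset.range N, (c0 q + c1 q) * h ^ q
        = (Gf α (pd 0 φ) (a + 1) b h - ∑ q ∈ Finset.range N, c0 q * h ^ q) + 
          (Gf α (pd 1 φ) a (b + 1) h - ∑ q ∈ Finset.range N, c1 q * h ^ q) := by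
        simp only [add_mul, Finset.sum_add_distrib]; ring
      rw [e, add_mul]
      exact (abs_add_le _ _).trans (add_le_add (hC0 h h0 h1) (hC1 h h0 h1)))
    have hexp : ∀ h : ℝ, 0 < h → h ≤ 1 → |Gf α φ a b h - (∑ q ∈ Finset.range N, (c0 q + c1 q) / (q + 1) * h ^ (q + 1) + L)| ≤
        (C0 + C1) * h ^ (N + 1) := fun h h0 h1 => by
      have := hL h h0 h1
      rwa [← sub_sub]
    refine ⟨fun q => Nat.casesOn q L (fun q => (c0 q + c1 q) / (q + 1)), C0 + C1, add_nonneg hC00 hC10, ?_, ?_⟩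
    · intro h h0 h1
      rw [Finset.sum_range_succ']
      simpa using hexp h h0 h1
    · intro q hq hcond
      rcases q with _ | q
      · change L = 0
        obtain ⟨C, hC0, hC⟩ := G_bound_odd hα hα2 hab hφ hc (hcond.imp VD_zero (by simpa using ·))
        have t1 : Filter.Tendsto (Gf α φ a b) (nhdsWithin 0 (Set.Ioi 0)) (nhds 0) := by
          refine squeeze_zero_norm' (a := fun h => C * h) ?_ ?_
          · filter_upwards [Ioo_mem_nhdsGT zero_lt_one] with h hh
            exact hC h hh.1 hh.2.le
          · have : Filter.Tendsto (fun h : ℝ => C * h) (nhds 0) (nhds (C * 0)) := (continuous_const_mul C).tendsto 0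
            rw [mul_zero] at this
            exact this.mono_left nhdsWithin_le_nhds
        have t2 : Filter.Tendsto (fun h => Gf α φ a b h - (∑ q ∈ Finset.range N, (c0 q + c1 q) / (q + 1) * h ^ (q + 1) + L))
            (nhdsWithin 0 (Set.Ioi 0)) (nhds 0) := by
          refine squeeze_zero_norm' (a := fun h => (C0 + C1) * h ^ (N + 1)) ?_ ?_
          · filter_upwards [Ioo_mem_nhdsGT zero_lt_one] with h hh
            exact hexp h hh.1 hh.2.le
          · have : Filter.Tendsto (fun h : ℝ => (C0 + C1) * h ^ (N + 1)) (nhds 0) (nhds ((C0 + C1) * 0 ^ (N + 1))) :=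
              Continuous.tendsto (by fun_prop) 0
            rw [zero_pow (by omega), mul_zero] at this
            exact this.mono_left nhdsWithin_le_nhds
        have t3 : Filter.Tendsto (fun h : ℝ => ∑ q ∈ Finset.range N, (c0 q + c1 q) / (q + 1) * h ^ (q + 1) + L)
            (nhdsWithin 0 (Set.Ioi 0)) (nhds L) := by
          have : Filter.Tendsto (fun h : ℝ => ∑ q ∈ Finset.range N, (c0 q + c1 q) / (q + 1) * h ^ (q + 1) + L)
            (nhds 0) (nhds (∑ q ∈ Finset.range N, (c0 q + c1 q) / (q + 1) * (0:ℝ) ^ (q + 1) + L)) :=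
              Continuous.tendsto (by fun_prop) 0
          simp only [ne_eq, Nat.add_eq_zero_iff, one_ne_zero, and_false, not_false_eq_true, zero_pow, mul_zero, Finset.sum_const_zero, zero_add] at this
          exact this.mono_left nhdsWithin_le_nhds
        have t4 := t2.add t3
        simp only [sub_add_cancel, zero_add] at t4
        exact tendsto_nhds_unique t4 t1
      · change (c0 q + c1 q) / (q + 1) = 0
        rw [hz0 q (by omega) (hcond.imp (VD_pd hφ · 0) (fun h => by convert h using 1; ring)), 
          hz1 q (by omega) (hcond.imp (VD_pd hφ · 1) (fun h => by convert h using 1; ring))]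
        simp


lemma Kf_smul (α : ℝ) (a b : ℕ) {h : ℝ} (hh : 0 < h) (y : Fin 2 → ℝ) :
    Kf α a b (h • y) = h ^ ((a:ℝ) + b - (2 + α)) * Kf α a b y := by
  have e0 : 0 ≤ euclNorm y := Real.sqrt_nonneg _
  unfold Kf
  rw [euclNorm_smul h hh.le, Real.mul_rpow hh.le e0, sub_eq_add_neg, Real.rpow_add hh,
    Real.rpow_add hh, Real.rpow_natCast, Real.rpow_natCast]
  simp only [Pi.smul_apply, smul_eq_mul, mul_pow]
  ring

lemma integrand_eq (α : ℝ) (g : (Fin 2 → ℝ) → ℝ) (i j : ℕ) (x : Fin 2 → ℝ) :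
    g x * sOn α x * x 0 ^ (2 * i) * x 1 ^ (2 * j) = g x * Kf α (2 + 2 * i) (2 * j) x := by
  have e0 : 0 ≤ euclNorm x := Real.sqrt_nonneg _
  unfold Kf sOn
  rw [Real.rpow_neg e0, pow_add, div_eq_mul_inv]
  ring

lemma c_eq {α : ℝ} (hα : 0 < α) (g : (Fin 2 → ℝ) → ℝ) (i j : ℕ) {h : ℝ} (hh : 0 < h) :
    h ^ (-(2 * ((i : ℝ) + (j : ℝ)) + 2 - α)) *
        ((∫ x : Fin 2 → ℝ, g x * sOn α x * x 0 ^ (2 * i) * x 1 ^ (2 * j)) -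
          trap h fun x => g x * sOn α x * x 0 ^ (2 * i) * x 1 ^ (2 * j))
      = Gf α g (2 + 2 * i) (2 * j) h := by
  simp only [integrand_eq]
  set a := 2 + 2 * i with ha
  set b := 2 * j with hb
  set r : ℝ := (a:ℝ) + b - (2 + α) with hr
  have hI : (∫ x : Fin 2 → ℝ, g x * Kf α a b x) = h ^ 2 * (h ^ r * ∫ x : Fin 2 → ℝ, g (h • x) * Kf α a b x) := by
    have := Measure.integral_comp_smul (volume : Measure (Fin 2 → ℝ)) (fun x => g x * Kf α a b x) h
    simp only [Kf_smul α a b hh, Module.finrank_fin_fun] at this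
    have e : ∀ x : Fin 2 → ℝ, g (h • x) * (h ^ r * Kf α a b x) = h ^ r * (g (h • x) * Kf α a b x) := fun x => by ring
    simp only [← hr, e, integral_const_mul] at this
    rw [this, abs_of_pos (by positivity), smul_eq_mul]
    field_simp
  have hT : (trap h fun x : Fin 2 → ℝ => g x * Kf α a b x)
      = h ^ 2 * (h ^ r * ∑' β : Fin 2 → ℤ, g (h • latP β) * Kf α a b (latP β)) := by
    unfold trap
    congr 1
    rw [← tsum_mul_left]
    have e : ∀ β : Fin 2 → ℤ, (fun j => (β j : ℝ) * h) = h • latP β := by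
      intro β; funext j; simp [latP, mul_comm]
    simp only [e, Kf_smul α a b hh, ← hr]
    have := tsum_subtype_eq_of_support_subset (f := fun β : Fin 2 → ℤ => g (h • latP β) * (h ^ r * Kf α a b (latP β)))
      (s := {β : Fin 2 → ℤ | β ≠ 0}) (by
        intro β hβ h0
        subst h0
        apply hβ
        have : latP 0 = 0 := by funext j; simp [latP]
        simp [this, Kf_zero hα])
    refine this.trans ?_
    exact tsum_congr fun β => by ring
  rw [hI, hT]
  have hk : h ^ (-(2 * ((i : ℝ) + (j : ℝ)) + 2 - α)) * (h ^ 2 * h ^ r) = 1 := by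
    rw [← Real.rpow_natCast h 2, ← Real.rpow_add hh, ← Real.rpow_add hh]
    have : -(2 * ((i : ℝ) + (j : ℝ)) + 2 - α) + (((2:ℕ):ℝ) + r) = 0 := by
      rw [hr, ha, hb]; push_cast; ring
    rw [this, Real.rpow_zero]
  unfold Gf
  set I := ∫ x : Fin 2 → ℝ, g (h • x) * Kf α a b x
  set S := ∑' β : Fin 2 → ℤ, g (h • latP β) * Kf α a b (latP β)
  linear_combination (I - S) * hk

lemma sum_even_odd (f : ℕ → ℝ) (hf : ∀ q, Odd q → f q = 0) (M : ℕ) :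
    ∑ q ∈ Finset.range (2 * M), f q = ∑ m ∈ Finset.range M, f (2 * m) := by
  induction M with
  | zero => simp
  | succ M ih =>
    rw [show 2 * (M + 1) = 2 * M + 1 + 1 by ring, Finset.sum_range_succ, Finset.sum_range_succ,
      Finset.sum_range_succ, ih, hf (2 * M + 1) ⟨M, rfl⟩]
    ring

lemma comp_expansion {p k : ℕ} {α : ℝ} (hα : 0 < α) (hα2 : α < 2)
    {g : (Fin 2 → ℝ) → ℝ} (hg : ContDiff ℝ (⊤ : ℕ∞) g) (hgc : HasCompactSupport g)
    (hgd : ∀ l : Fin 2 → ℕ, 1 ≤ ∑ j, l j → ∑ j, l j ≤ 2 * p + 1 → md l g 0 = 0)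
    (i j : ℕ) (L : ℝ)
    (hL : Filter.Tendsto (Gf α g (2 + 2 * i) (2 * j)) (nhdsWithin 0 (Set.Ioi 0)) (nhds L)) :
    ∃ v : Fin (k + 1) → ℝ, ∃ C : ℝ, 0 ≤ C ∧ ∀ h : ℝ, 0 < h → h ≤ 1 →
      |Gf α g (2 + 2 * i) (2 * j) h - L - h ^ (2 * p + 2) * ∑ m : Fin (k + 1), v m * h ^ (2 * (m : ℕ))|
        ≤ C * h ^ (2 * p + 4 + 2 * k) := by
  obtain ⟨c, C, hC, hb, h0⟩ := expansion hα hα2 (2 * ((p + 1) + (k + 1))) (a := 2 + 2 * i) (b := 2 * j)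
    (by omega) hg hgc
  have key : ∀ h : ℝ, ∑ q ∈ Finset.range (2 * ((p + 1) + (k + 1))), c q * h ^ q
      = c 0 + h ^ (2 * p + 2) * ∑ m : Fin (k + 1), c (2 * p + 2 + 2 * m) * h ^ (2 * (m : ℕ)) := by
    intro h
    have e1 : ∑ q ∈ Finset.range (2 * ((p + 1) + (k + 1))), c q * h ^ q
      = ∑ q ∈ Finset.range (2 * ((p + 1) + (k + 1))), (if Odd q then 0 else c q * h ^ q) := by
      refine Finset.sum_congr rfl fun q hq => ?_
      split_ifs with ho
      · rw [h0 q (Finset.mem_range.mp hq) (Or.inr ?_), zero_mul]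
        have : Even (2 + 2 * i + 2 * j) := ⟨1 + i + j, by ring⟩
        exact this.add_odd ho
      · rfl
    rw [e1, sum_even_odd _ (fun q hq => by simp [hq])]
    have e2 : ∀ m : ℕ, ¬ Odd (2 * m) := fun m => by simp
    simp only [e2, if_false]
    rw [Finset.sum_range_add, Finset.sum_range_succ', Finset.sum_eq_zero, Finset.mul_sum, ← Fin.sum_univ_eq_sum_range (fun x => c (2 * (p + 1 + x)) * h ^ (2 * (p + 1 + x)))]
    · simp only [mul_zero, pow_zero, mul_one, zero_add]
      congr 1
      refine Finset.sum_congr rfl fun m _ => ?_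
      rw [show 2 * (p + 1 + (m:ℕ)) = 2 * p + 2 + 2 * m by ring, pow_add]
      ring
    · intro m hm
      have hm := Finset.mem_range.mp hm
      rw [h0 _ (by omega) (Or.inl ?_), zero_mul]
      intro l hl
      exact hgd l (by omega) (by omega)
  have hc0 : c 0 = L := by
    refine tendsto_nhds_unique ?_ hL
    have hcont : Filter.Tendsto (fun h : ℝ => ∑ q ∈ Finset.range (2 * ((p + 1) + (k + 1))), c q * h ^ q)
        (nhdsWithin 0 (Set.Ioi 0)) (nhds (c 0)) := by
      have : Continuous (fun h : ℝ => ∑ q ∈ Finset.range (2 * ((p + 1) + (k + 1))), c q * h ^ q) := by fun_prop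
      have h2 := (this.tendsto 0).mono_left (nhdsWithin_le_nhds (s := Set.Ioi (0:ℝ)))
      rw [key 0] at h2
      simpa using h2
    have hz : Filter.Tendsto (fun h : ℝ => C * h ^ (2 * ((p + 1) + (k + 1)))) (nhdsWithin 0 (Set.Ioi 0)) (nhds 0) := by
      have : Continuous (fun h : ℝ => C * h ^ (2 * ((p + 1) + (k + 1)))) := by fun_prop
      have h2 := (this.tendsto 0).mono_left (nhdsWithin_le_nhds (s := Set.Ioi (0:ℝ)))
      simpa using h2
    have hd : Filter.Tendsto (fun h : ℝ => Gf α g (2 + 2 * i) (2 * j) h - ∑ q ∈ Finset.range (2 * ((p + 1) + (k + 1))), c q * h ^ q)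
        (nhdsWithin 0 (Set.Ioi 0)) (nhds 0) := by
      refine squeeze_zero_norm' ?_ hz
      filter_upwards [Ioc_mem_nhdsGT (zero_lt_one' ℝ)] with h hh
      exact hb h hh.1 hh.2
    simpa using hd.add hcont
  refine ⟨fun m => c (2 * p + 2 + 2 * m), C, hC, fun h hh h1 => ?_⟩
  have := hb h hh h1
  rw [key h, hc0, ← sub_sub] at this
  rw [show 2 * p + 4 + 2 * k = 2 * ((p + 1) + (k + 1)) by ring]
  exact this

/-- asymptotic expansion in even powers of `h` of the right-hand side vector
`c(h)` of the on-diagonal moment linear system. -/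
theorem on_diagonal_rhs_expansion
    (p k : ℕ) (α : ℝ) (hα0 : 0 < α) (hα2 : α < 2)
    (g : (Fin 2 → ℝ) → ℝ) (hg : ContDiff ℝ (⊤ : ℕ∞) g) (hgc : HasCompactSupport g)
    (hg0 : g 0 = 1)
    (hgd : ∀ l : Fin 2 → ℕ, 1 ≤ ∑ j, l j → ∑ j, l j ≤ 2 * p + 1 → md l g 0 = 0)
    (Np : ℕ) (hNp : Np = (p + 1) * (p + 2) / 2)
    (ξ : Fin Np → ℕ × ℕ) (hξinj : Function.Injective ξ)
    (hξmem : ∀ i, (ξ i).1 + (ξ i).2 ≤ p)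
    (hξsurj : ∀ γ : ℕ × ℕ, γ.1 + γ.2 ≤ p → ∃ i, ξ i = γ)
    (c : ℝ → Fin Np → ℝ)
    (hc : ∀ h : ℝ, 0 < h → ∀ i, c h i =
      h ^ (-(2 * (((ξ i).1 : ℝ) + ((ξ i).2 : ℝ)) + 2 - α)) *
        ((∫ x : Fin 2 → ℝ, g x * sOn α x * x 0 ^ (2 * (ξ i).1) * x 1 ^ (2 * (ξ i).2)) -
          trap h fun x => g x * sOn α x * x 0 ^ (2 * (ξ i).1) * x 1 ^ (2 * (ξ i).2)))
    (cc : Fin Np → ℝ)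
    (hcc : Filter.Tendsto c (nhdsWithin 0 (Set.Ioi 0)) (nhds cc)) :
    ∃ Cv : Fin (k + 1) → Fin Np → ℝ, ∃ C > (0:ℝ), ∃ h₀ > (0:ℝ),
      ∀ h : ℝ, 0 < h → h < h₀ →
        Real.sqrt (∑ i, (c h i - cc i -
            h ^ (2 * p + 2) * ∑ j : Fin (k + 1), Cv j i * h ^ (2 * (j : ℕ))) ^ 2) ≤
          C * h ^ (2 * p + 4 + 2 * k) := by
  have hcG : ∀ h : ℝ, 0 < h → ∀ i, c h i = Gf α g (2 + 2 * (ξ i).1) (2 * (ξ i).2) h := by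
    intro h hh i
    rw [hc h hh i, c_eq hα0 g _ _ hh]
  have hlim : ∀ i, Filter.Tendsto (Gf α g (2 + 2 * (ξ i).1) (2 * (ξ i).2)) (nhdsWithin 0 (Set.Ioi 0)) (nhds (cc i)) := by
    intro i
    refine ((tendsto_pi_nhds.mp hcc) i).congr' ?_
    filter_upwards [self_mem_nhdsWithin] with h hh
    exact hcG h hh i
  choose v C hC hb using fun i => comp_expansion (k := k) hα0 hα2 hg hgc hgd _ _ (cc i) (hlim i)
  refine ⟨fun j i => v i j, ∑ i, C i + 1, ?_, 1, one_pos, fun h hh h1 => ?_⟩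
  · have := Finset.sum_nonneg (fun i (_ : i ∈ Finset.univ) => hC i)
    linarith
  have hle : ∀ i, |c h i - cc i - h ^ (2 * p + 2) * ∑ j : Fin (k + 1), v i j * h ^ (2 * (j : ℕ))|
      ≤ C i * h ^ (2 * p + 4 + 2 * k) := by
    intro i
    rw [hcG h hh i]
    exact hb i h hh h1.le
  have hP : 0 ≤ h ^ (2 * p + 4 + 2 * k) := by positivity
  have hS := Finset.sum_nonneg (fun i (_ : i ∈ Finset.univ) => hC i)
  refine Real.sqrt_le_iff.mpr ⟨by positivity, ?_⟩
  calc _ ≤ ∑ i, (C i * h ^ (2 * p + 4 + 2 * k)) ^ 2 := by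
        refine Finset.sum_le_sum fun i _ => ?_
        exact sq_le_sq' (neg_le_of_abs_le (hle i)) (le_of_abs_le (hle i))
    _ ≤ (∑ i, C i * h ^ (2 * p + 4 + 2 * k)) ^ 2 :=
        Finset.sum_sq_le_sq_sum_of_nonneg fun i _ => mul_nonneg (hC i) hP
    _ ≤ _ := by
        rw [← Finset.sum_mul]
        have h3 : 0 ≤ (∑ i, C i) * h ^ (2 * p + 4 + 2 * k) := mul_nonneg hS hP
        refine pow_le_pow_left₀ h3 ?_ 2
        nlinarith
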